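/- arXiv:1001.4110 — 2 statements merged into one kernel-verified Lean document; each statement's English description precedes it below -/
import Mathlib

section
/- Theorem 2 (ℓ1/ℓ1 approximate recovery). Let ε > 0 and suppose G is a (c,d)-regular (⌊k/(2ε)+1⌋, 1/2+ε)-expander. Let x ∈ ℝ₊ⁿ and run the message-passing algorithm on y = Ax. Then there exists a constant C depending only on ε such that for every integer t ≥ C·(1+log(k+1))·(1+log(cd)), the estimate satisfies ‖x − x̂^{2t}‖₁ ≤ (1 + d/(2ε))·‖x − x^(k)‖₁. -/
open Finset

namespace MP

/-- Neighborhood of a left vertex `i ∈ X`: the measurements involving `i`. -/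
def nhdX {n m : ℕ} (A : Fin m → Fin n → Bool) (i : Fin n) : Finset (Fin m) :=
  Finset.univ.filter (fun j => A j i = true)

/-- Neighborhood of a right vertex `j ∈ Y`. -/
def nhdY {n m : ℕ} (A : Fin m → Fin n → Bool) (j : Fin m) : Finset (Fin n) :=
  Finset.univ.filter (fun i => A j i = true)

/-- `Γ(S)`, the set of neighbors of `S ⊆ X`. -/
def Gam {n m : ℕ} (A : Fin m → Fin n → Bool) (S : Finset (Fin n)) : Finset (Fin m) :=
  S.biUnion (nhdX A)

/-- The measurement vector `y = A x`. -/
noncomputable def yvec {n m : ℕ} (A : Fin m → Fin n → Bool) (x : Fin n → ℝ) (j : Fin m) : ℝ :=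
  ∑ i ∈ nhdY A j, x i

/-- Message from measurement `j` to variable `i`, given current variable messages `z`:
`y_j - ∑_{k ∈ N_y(j) \ {i}} z_k`. -/
noncomputable def msgY {n m : ℕ} (A : Fin m → Fin n → Bool) (x z : Fin n → ℝ)
    (j : Fin m) (i : Fin n) : ℝ :=
  yvec A x j - ∑ k ∈ (nhdY A j).erase i, z k

/-- The algorithm's estimate `x̂^s` (equal to the variable-to-check message `m_{i→j}^s`,
which does not depend on `j`).  At odd times it is the min of incoming check messages;
at even times `s+1` it is `max(0, max of incoming check messages)`. -/
noncomputable def xhat {n m : ℕ} (A : Fin m → Fin n → Bool) (x : Fin n → ℝ) :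
    ℕ → Fin n → ℝ
  | 0 => fun _ => 0
  | s + 1 => fun i =>
      if Even (s + 1) then
        max 0 (sSup ((fun l => msgY A x (xhat A x s) l i) '' (↑(nhdX A i) : Set (Fin m))))
      else
        sInf ((fun l => msgY A x (xhat A x s) l i) '' (↑(nhdX A i) : Set (Fin m)))

/-- The variable-to-check message `m_{i→j}^s` (independent of `j`). -/
noncomputable def mXY {n m : ℕ} (A : Fin m → Fin n → Bool) (x : Fin n → ℝ)
    (s : ℕ) (i : Fin n) (_j : Fin m) : ℝ := xhat A x s i

/-- The check-to-variable message `m_{j→i}^s`. -/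
noncomputable def mYX {n m : ℕ} (A : Fin m → Fin n → Bool) (x : Fin n → ℝ)
    (s : ℕ) (j : Fin m) (i : Fin n) : ℝ := msgY A x (xhat A x s) j i

/-- `G` is `(c,d)`-regular. -/
def IsRegular {n m : ℕ} (A : Fin m → Fin n → Bool) (c d : ℕ) : Prop :=
  (∀ i, (nhdX A i).card = c) ∧ (∀ j, (nhdY A j).card = d)

/-- `G` is a `(kk, α)`-expander (w.r.t. left degree `c`). -/
def IsExpander {n m : ℕ} (A : Fin m → Fin n → Bool) (c kk : ℕ) (α : ℝ) : Prop :=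
  ∀ S : Finset (Fin n), S.card ≤ kk → α * c * S.card ≤ ((Gam A S).card : ℝ)

/-- ℓ¹ norm on `ℝⁿ`. -/
noncomputable def l1 {n : ℕ} (u : Fin n → ℝ) : ℝ := ∑ i, |u i|

/-- `z` has at most `k` nonzero entries. -/
def IsKSparse {n : ℕ} (k : ℕ) (z : Fin n → ℝ) : Prop :=
  (Finset.univ.filter (fun i => z i ≠ 0)).card ≤ k

/-- `xk` is a best `k`-sparse nonnegative approximation of `x` in ℓ¹. -/
def BestKSparse {n : ℕ} (k : ℕ) (x xk : Fin n → ℝ) : Prop :=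
  (∀ i, 0 ≤ xk i) ∧ IsKSparse k xk ∧
    ∀ z : Fin n → ℝ, (∀ i, 0 ≤ z i) → IsKSparse k z →
      l1 (fun i => x i - xk i) ≤ l1 (fun i => x i - z i)


end MP

open MP Finset

namespace MPaux

variable {n m : ℕ} {A : Fin m → Fin n → Bool}

lemma mem_nhdX {i : Fin n} {l : Fin m} : l ∈ nhdX A i ↔ A l i = true := by simp [nhdX]

lemma mem_nhdY {i : Fin n} {l : Fin m} : i ∈ nhdY A l ↔ A l i = true := by simp [nhdY]

lemma mem_Gam {S : Finset (Fin n)} {l : Fin m} : l ∈ Gam A S ↔ ∃ i ∈ S, A l i = true := by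
  simp [Gam, mem_nhdX]

/-- Generic exchange of summation over edges. -/
lemma sum_edges (g : Fin m → Fin n → ℝ) (S : Finset (Fin n)) (L : Finset (Fin m)) :
    ∑ l ∈ L, ∑ k ∈ nhdY A l ∩ S, g l k = ∑ k ∈ S, ∑ l ∈ nhdX A k ∩ L, g l k := by
  apply Finset.sum_comm'
  intro l k
  simp only [mem_inter, mem_nhdX, mem_nhdY]
  tauto

/-- Double counting. -/
lemma double_count {c : ℕ} (hc : ∀ i, (nhdX A i).card = c) (v : Fin n → ℝ)
    (S : Finset (Fin n)) :
    ∑ l, ∑ k ∈ nhdY A l ∩ S, v k = c * ∑ k ∈ S, v k := by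
  rw [sum_edges (fun _ k => v k) S univ, Finset.mul_sum]
  refine Finset.sum_congr rfl fun k _ => ?_
  simp [hc k]

/-- Weighted expansion. -/
lemma weighted_expansion (a : ℝ) :
    ∀ (N : ℕ) (T : Finset (Fin n)), T.card = N →
      (∀ S ⊆ T, a * S.card ≤ ((Gam A S).card : ℝ)) →
      ∀ (v : Fin n → ℝ) (g : Fin m → ℝ), (∀ i ∈ T, 0 ≤ v i) →
      (∀ i ∈ T, ∀ l ∈ nhdX A i, v i ≤ g l) →
      a * ∑ i ∈ T, v i ≤ ∑ l ∈ Gam A T, g l := by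
  intro N
  induction N with
  | zero =>
    intro T hT _ v g _ _
    rw [Finset.card_eq_zero] at hT
    subst hT
    simp [Gam]
  | succ N ih =>
    intro T hT hexp v g hv hg
    have hne : T.Nonempty := by
      rw [← Finset.card_pos]; omega
    obtain ⟨i0, hi0, hmin⟩ := Finset.exists_min_image T v hne
    have hcard : (T.erase i0).card = N := by
      rw [Finset.card_erase_of_mem hi0]; omega
    have key := ih (T.erase i0) hcard
      (fun S hS => hexp S (hS.trans (Finset.erase_subset _ _)))
      (fun i => v i - v i0) (fun l => g l - v i0)
      (fun i hi => sub_nonneg.2 (hmin i (Finset.mem_of_mem_erase hi)))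
      (fun i hi l hl => by
        have := hg i (Finset.mem_of_mem_erase hi) l hl
        linarith)
    have h1 : ∑ l ∈ Gam A (T.erase i0), (g l - v i0) ≤ ∑ l ∈ Gam A T, (g l - v i0) := by
      apply Finset.sum_le_sum_of_subset_of_nonneg
      · exact Finset.biUnion_subset_biUnion_of_subset_left _ (Finset.erase_subset _ _)
      · intro l hl _
        obtain ⟨i, hi, hil⟩ := mem_Gam.1 hl
        have := hg i hi l (mem_nhdX.2 hil)
        have := hmin i hi
        linarith
    have h2 : ∑ i ∈ T.erase i0, (v i - v i0) = ∑ i ∈ T, (v i - v i0) := by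
      apply Finset.sum_erase
      simp
    rw [h2] at key
    simp only [Finset.sum_sub_distrib, Finset.sum_const, nsmul_eq_mul] at key h1
    have h3 := mul_le_mul_of_nonneg_right (hexp T (Finset.Subset.refl _)) (hv i0 hi0)
    nlinarith

/-- One contraction step. -/
lemma contraction {c : ℕ} (hc : ∀ i, (nhdX A i).card = c) {ε : ℝ} {T : Finset (Fin n)}
    (hexp : ∀ S ⊆ T, (1 / 2 + ε) * c * S.card ≤ ((Gam A S).card : ℝ))
    (w w' : Fin n → ℝ) (hw' : ∀ i, 0 ≤ w' i) (hmono : ∀ i, w' i ≤ w i)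
    (ν : Fin m → ℝ)
    (hstep : ∀ i ∈ T, ∀ l ∈ nhdX A i, w' i ≤ ∑ k ∈ (nhdY A l ∩ T).erase i, w k + ν l) :
    (1 + 2 * ε) * (c * ∑ i ∈ T, w' i) ≤ c * ∑ i ∈ T, w i + ∑ l ∈ Gam A T, ν l := by
  have h := weighted_expansion ((1 / 2 + ε) * c) _ T rfl hexp w'
    (fun l => (∑ k ∈ nhdY A l ∩ T, w k + ν l) / 2) (fun i _ => hw' i) (by
      intro i hi l hl
      have h1 := hstep i hi l hl
      have h2 : i ∈ nhdY A l ∩ T := mem_inter.2 ⟨mem_nhdY.2 (mem_nhdX.1 hl), hi⟩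
      have h3 := Finset.add_sum_erase _ w h2
      have := hmono i
      linarith)
  rw [← Finset.sum_div, Finset.sum_add_distrib] at h
  have h4 : ∑ l ∈ Gam A T, ∑ k ∈ nhdY A l ∩ T, w k ≤ ∑ l, ∑ k ∈ nhdY A l ∩ T, w k := by
    apply Finset.sum_le_sum_of_subset_of_nonneg (Finset.subset_univ _)
    intro l _ _
    exact Finset.sum_nonneg fun k _ => (hw' k).trans (hmono k)
  rw [double_count hc] at h4
  linarith

/-- Peeling of vertices with a unique neighbour. -/
lemma peel {c : ℕ} (hc0 : 0 < c) (hc : ∀ i, (nhdX A i).card = c) {ε : ℝ} {S : Finset (Fin n)}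
    (hexp : (1 / 2 + ε) * c * S.card ≤ ((Gam A S).card : ℝ)) :
    ∃ S' ⊆ S, (S'.card : ℝ) ≤ (1 - 2 * ε) * S.card ∧
      ∀ i ∈ S, i ∉ S' → ∃ l ∈ nhdX A i, nhdY A l ∩ S = {i} := by
  classical
  set P : Fin n → Prop := fun i => ∃ l ∈ nhdX A i, nhdY A l ∩ S = {i} with hP
  set Q := S.filter P with hQ
  refine ⟨S \ Q, Finset.sdiff_subset, ?_, ?_⟩
  · have hcard : ((S \ Q).card : ℝ) = S.card - Q.card := by
      rw [Finset.card_sdiff_of_subset (Finset.filter_subset _ _), Nat.cast_sub]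
      exact Finset.card_le_card (Finset.filter_subset _ _)
    have h1 := double_count hc (fun _ => (1 : ℝ)) S
    have h2 := double_count hc (fun _ => (1 : ℝ)) Q
    have h3 : ∑ l ∈ Gam A S, (2 : ℝ) ≤
        ∑ l, (∑ k ∈ nhdY A l ∩ S, (1 : ℝ) + ∑ k ∈ nhdY A l ∩ Q, (1 : ℝ)) := by
      refine le_trans (Finset.sum_le_sum (f := fun _ => (2 : ℝ)) ?_)
        (Finset.sum_le_sum_of_subset_of_nonneg (Finset.subset_univ (Gam A S)) ?_)
      · intro l hl
        obtain ⟨i, hi, hil⟩ := mem_Gam.1 hl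
        have hmem : i ∈ nhdY A l ∩ S := mem_inter.2 ⟨mem_nhdY.2 hil, hi⟩
        simp only [Finset.sum_const, nsmul_eq_mul, mul_one]
        have hpos : 0 < (nhdY A l ∩ S).card := Finset.card_pos.2 ⟨i, hmem⟩
        have : 2 ≤ (nhdY A l ∩ S).card + (nhdY A l ∩ Q).card := by
          by_cases h : (nhdY A l ∩ S).card = 1
          · obtain ⟨j, hj⟩ := Finset.card_eq_one.1 h
            have hij : i = j := by rw [hj] at hmem; simpa using hmem
            subst hij
            have : 0 < (nhdY A l ∩ Q).card := Finset.card_pos.2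
              ⟨i, mem_inter.2 ⟨mem_nhdY.2 hil, Finset.mem_filter.2
                ⟨hi, l, mem_nhdX.2 hil, hj⟩⟩⟩
            omega
          · omega
        exact_mod_cast this
      · intro l _ _
        positivity
    rw [Finset.sum_add_distrib, h1, h2] at h3
    simp only [Finset.sum_const, nsmul_eq_mul, mul_one] at h3
    rw [hcard]
    have hcpos : (0 : ℝ) < c := by exact_mod_cast hc0
    have h4 : (c : ℝ) * (S.card - Q.card) ≤ c * ((1 - 2 * ε) * S.card) := by linarith
    exact le_of_mul_le_mul_left h4 hcpos
  · intro i hi hni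
    by_contra hcon
    exact hni (Finset.mem_sdiff.2 ⟨hi, fun h => hcon (Finset.mem_filter.1 h).2⟩)

/-- Iterated peeling. -/
lemma peel_iter {c d : ℕ} (hc0 : 0 < c) (hd0 : 0 < d) (hc : ∀ i, (nhdX A i).card = c)
    (hd : ∀ l, (nhdY A l).card = d)
    {ε : ℝ} (hε : ε ≤ 1 / 2) {T : Finset (Fin n)}
    (hexp : ∀ S ⊆ T, (1 / 2 + ε) * c * S.card ≤ ((Gam A S).card : ℝ))
    (w : ℕ → Fin n → ℝ) (hmono : ∀ t i, w (t + 1) i ≤ w t i)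
    (ν : Fin m → ℝ) (N : ℝ) (hN0 : 0 ≤ N) (hN : ∀ l ∈ Gam A T, ν l ≤ N)
    (hstep : ∀ t, ∀ i ∈ T, ∀ l ∈ nhdX A i,
      w (t + 1) i ≤ ∑ k ∈ (nhdY A l ∩ T).erase i, w t k + ν l) (r : ℕ) :
    ∃ S ⊆ T, (S.card : ℝ) ≤ (1 - 2 * ε) ^ r * T.card ∧
      ∀ i ∈ T, i ∉ S → w r i ≤ (d : ℝ) ^ r * N := by
  induction r with
  | zero => exact ⟨T, Finset.Subset.refl _, by simp, fun i h1 h2 => absurd h1 h2⟩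
  | succ r ih =>
    obtain ⟨S, hST, hcard, hS⟩ := ih
    obtain ⟨S', hS', hcard', hu⟩ := peel hc0 hc (hexp S hST)
    have hd1 : (1 : ℝ) ≤ d := by exact_mod_cast hd0
    have hpow : (1 : ℝ) ≤ (d : ℝ) ^ r := one_le_pow₀ hd1
    refine ⟨S', hS'.trans hST, ?_, ?_⟩
    · calc (S'.card : ℝ) ≤ (1 - 2 * ε) * S.card := hcard'
        _ ≤ (1 - 2 * ε) * ((1 - 2 * ε) ^ r * T.card) :=
          mul_le_mul_of_nonneg_left hcard (by linarith)
        _ = _ := by ring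
    · intro i hiT hiS'
      by_cases hiS : i ∈ S
      · obtain ⟨l, hl, huniq⟩ := hu i hiS hiS'
        have hiY : i ∈ nhdY A l := mem_nhdY.2 (mem_nhdX.1 hl)
        have h1 : ∑ k ∈ (nhdY A l ∩ T).erase i, w r k ≤
            ∑ k ∈ (nhdY A l ∩ T).erase i, (d : ℝ) ^ r * N := by
          refine Finset.sum_le_sum fun k hk => ?_
          rw [Finset.mem_erase, Finset.mem_inter] at hk
          refine hS k hk.2.2 fun hkS => hk.1 ?_
          have : k ∈ nhdY A l ∩ S := mem_inter.2 ⟨hk.2.1, hkS⟩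
          rw [huniq] at this
          simpa using this
        rw [Finset.sum_const, nsmul_eq_mul] at h1
        have h2 : (((nhdY A l ∩ T).erase i).card : ℝ) ≤ d - 1 := by
          have h3 : ((nhdY A l ∩ T).erase i).card ≤ ((nhdY A l).erase i).card :=
            Finset.card_le_card (Finset.erase_subset_erase _ Finset.inter_subset_left)
          rw [Finset.card_erase_of_mem hiY, hd] at h3
          have : ((nhdY A l ∩ T).erase i).card + 1 ≤ d := by omega
          have : ((((nhdY A l ∩ T).erase i).card + 1 : ℕ) : ℝ) ≤ d := by exact_mod_cast this
          push_cast at this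
          linarith
        have h4 := hstep r i hiT l hl
        have h5 := hN l (mem_Gam.2 ⟨i, hiT, mem_nhdX.1 hl⟩)
        have h6 : (0 : ℝ) ≤ (d : ℝ) ^ r * N := by positivity
        have h7 := mul_le_mul_of_nonneg_right h2 h6
        have h8 : N ≤ (d : ℝ) ^ r * N := le_mul_of_one_le_left hN0 hpow
        rw [pow_succ]
        nlinarith
      · have h1 := hS i hiT hiS
        have h2 := hmono r i
        have h6 : (0 : ℝ) ≤ (d : ℝ) ^ r * N := by positivity
        rw [pow_succ]
        nlinarith

/-- Closure of a small set. -/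
lemma exists_closure {c k K : ℕ} (hc0 : 0 < c) (hc : ∀ i, (nhdX A i).card = c) {ε : ℝ}
    (hkK : k < K) (hK : (k : ℝ) < 2 * ε * K) (hexp : IsExpander A c K (1 / 2 + ε))
    (S : Finset (Fin n)) (hS : S.card ≤ k) :
    ∃ T, S ⊆ T ∧ T.card < K ∧ ∀ i ∉ T, (nhdX A i ∩ Gam A T).card ≤ (nhdX A i \ Gam A T).card := by
  classical
  set F : Finset (Finset (Fin n)) := univ.filter fun T =>
    S ⊆ T ∧ T.card < K ∧ 2 * (Gam A T).card ≤ c * k + c * T.card with hF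
  have hSF : S ∈ F := by
    rw [hF, Finset.mem_filter]
    refine ⟨mem_univ _, Finset.Subset.refl _, by omega, ?_⟩
    have h1 : (Gam A S).card ≤ S.card * c :=
      Finset.card_biUnion_le_card_mul _ _ _ fun i _ => (hc i).le
    nlinarith
  obtain ⟨T, hT, hmax⟩ := Finset.exists_max_image F Finset.card ⟨S, hSF⟩
  rw [hF, Finset.mem_filter] at hT
  obtain ⟨-, hST, hTK, hG⟩ := hT
  refine ⟨T, hST, hTK, fun i hi => ?_⟩
  by_contra hcon
  push Not at hcon
  have hsum : (nhdX A i ∩ Gam A T).card + (nhdX A i \ Gam A T).card = c := by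
    rw [Finset.card_inter_add_card_sdiff, hc]
  have hins : (insert i T).card = T.card + 1 := Finset.card_insert_of_notMem hi
  have hGi : (Gam A (insert i T)).card = (Gam A T).card + (nhdX A i \ Gam A T).card := by
    have : Gam A (insert i T) = nhdX A i ∪ Gam A T := by
      unfold Gam; rw [Finset.biUnion_insert]
    rw [this, Finset.union_comm, Finset.card_union, ← Finset.card_sdiff_add_card_inter (nhdX A i) (Gam A T),
      Finset.inter_comm (Gam A T)]
    omega
  have hG' : 2 * (Gam A (insert i T)).card ≤ c * k + c * (insert i T).card := by
    rw [hGi, hins, mul_add, mul_add, mul_one]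
    omega
  by_cases hlt : (insert i T).card < K
  · have := hmax (insert i T) (by
      rw [hF, Finset.mem_filter]
      exact ⟨mem_univ _, hST.trans (Finset.subset_insert _ _), hlt, hG'⟩)
    omega
  · have hEq : (insert i T).card = K := by omega
    have h1 := hexp (insert i T) hEq.le
    rw [hEq] at h1 hG'
    have h2 : (2 : ℝ) * (Gam A (insert i T)).card ≤ c * k + c * K := by exact_mod_cast hG'
    have hcpos : (0 : ℝ) < c := by exact_mod_cast hc0
    have h3 := mul_lt_mul_of_pos_left hK hcpos
    nlinarith

/-! ### Dynamics of the algorithm -/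

lemma msg_eq (x z : Fin n → ℝ) {l : Fin m} {i : Fin n} (h : l ∈ nhdX A i) :
    msgY A x z l i = x i + ∑ k ∈ (nhdY A l).erase i, (x k - z k) := by
  have hi : i ∈ nhdY A l := mem_nhdY.2 (mem_nhdX.1 h)
  rw [msgY, yvec, ← Finset.add_sum_erase _ _ hi, Finset.sum_sub_distrib]
  ring

lemma msg_anti (x : Fin n → ℝ) {z z' : Fin n → ℝ} (h : ∀ i, z i ≤ z' i) (l : Fin m) (i : Fin n) :
    msgY A x z' l i ≤ msgY A x z l i := by
  unfold msgY
  have := Finset.sum_le_sum (s := (nhdY A l).erase i) fun k _ => h k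
  linarith

/-- The odd (min) step. -/
noncomputable def lo (A : Fin m → Fin n → Bool) (x z : Fin n → ℝ) (i : Fin n) : ℝ :=
  sInf ((fun l => msgY A x z l i) '' (↑(nhdX A i) : Set (Fin m)))

/-- The even (max) step. -/
noncomputable def hi (A : Fin m → Fin n → Bool) (x z : Fin n → ℝ) (i : Fin n) : ℝ :=
  max 0 (sSup ((fun l => msgY A x z l i) '' (↑(nhdX A i) : Set (Fin m))))

lemma lo_le (x z : Fin n → ℝ) {l : Fin m} {i : Fin n} (h : l ∈ nhdX A i) :
    lo A x z i ≤ msgY A x z l i :=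
  csInf_le (Set.Finite.bddBelow (Set.toFinite _)) ⟨l, h, rfl⟩

lemma le_hi (x z : Fin n → ℝ) {l : Fin m} {i : Fin n} (h : l ∈ nhdX A i) :
    msgY A x z l i ≤ hi A x z i :=
  le_max_of_le_right (le_csSup (Set.Finite.bddAbove (Set.toFinite _)) ⟨l, h, rfl⟩)

lemma le_lo (x z : Fin n → ℝ) {i : Fin n} (hne : (nhdX A i).Nonempty) {b : ℝ}
    (h : ∀ l ∈ nhdX A i, b ≤ msgY A x z l i) : b ≤ lo A x z i := by
  apply le_csInf
  · obtain ⟨l, hl⟩ := hne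
    exact ⟨_, l, hl, rfl⟩
  · rintro _ ⟨l, hl, rfl⟩
    exact h l hl

lemma hi_le (x z : Fin n → ℝ) {i : Fin n} (hne : (nhdX A i).Nonempty) {b : ℝ} (hb : 0 ≤ b)
    (h : ∀ l ∈ nhdX A i, msgY A x z l i ≤ b) : hi A x z i ≤ b := by
  refine max_le hb (csSup_le ?_ ?_)
  · obtain ⟨l, hl⟩ := hne
    exact ⟨_, l, hl, rfl⟩
  · rintro _ ⟨l, hl, rfl⟩
    exact h l hl

lemma hi_nonneg (x z : Fin n → ℝ) (i : Fin n) : 0 ≤ hi A x z i := le_max_left _ _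

lemma lo_anti (hne : ∀ i, (nhdX A i).Nonempty) (x : Fin n → ℝ) {z z' : Fin n → ℝ}
    (h : ∀ i, z i ≤ z' i) (i : Fin n) : lo A x z' i ≤ lo A x z i :=
  le_lo x z (hne i) fun l hl => (lo_le x z' hl).trans (msg_anti x h l i)

lemma hi_anti (hne : ∀ i, (nhdX A i).Nonempty) (x : Fin n → ℝ) {z z' : Fin n → ℝ}
    (h : ∀ i, z i ≤ z' i) (i : Fin n) : hi A x z' i ≤ hi A x z i :=
  hi_le x z' (hne i) (hi_nonneg _ _ _) fun l hl => (msg_anti x h l i).trans (le_hi x z hl)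

lemma le_lo_self (hne : ∀ i, (nhdX A i).Nonempty) (x : Fin n → ℝ) {z : Fin n → ℝ}
    (h : ∀ i, z i ≤ x i) (i : Fin n) : x i ≤ lo A x z i := by
  refine le_lo x z (hne i) fun l hl => ?_
  rw [msg_eq x z hl]
  have : 0 ≤ ∑ k ∈ (nhdY A l).erase i, (x k - z k) :=
    Finset.sum_nonneg fun k _ => sub_nonneg.2 (h k)
  linarith

lemma hi_le_self (hne : ∀ i, (nhdX A i).Nonempty) (x : Fin n → ℝ) (hx : ∀ i, 0 ≤ x i)
    {z : Fin n → ℝ} (h : ∀ i, x i ≤ z i) (i : Fin n) : hi A x z i ≤ x i := by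
  refine hi_le x z (hne i) (hx i) fun l hl => ?_
  rw [msg_eq x z hl]
  have : ∑ k ∈ (nhdY A l).erase i, (x k - z k) ≤ 0 :=
    Finset.sum_nonpos fun k _ => sub_nonpos.2 (h k)
  linarith

lemma xhat_odd (x : Fin n → ℝ) (t : ℕ) : xhat A x (2 * t + 1) = lo A x (xhat A x (2 * t)) := by
  funext i
  have h : ¬ Even (2 * t + 1) := by simp [parity_simps]
  rw [xhat]
  simp only [h, if_false]
  rfl

lemma xhat_even (x : Fin n → ℝ) (t : ℕ) :
    xhat A x (2 * (t + 1)) = hi A x (xhat A x (2 * t + 1)) := by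
  funext i
  have h : Even (2 * t + 1 + 1) := ⟨t + 1, by ring⟩
  rw [show 2 * (t + 1) = 2 * t + 1 + 1 by ring, xhat]
  simp only [h, if_true]
  rfl

lemma xhat_zero (x : Fin n → ℝ) (i : Fin n) : xhat A x (2 * 0) i = 0 := by
  simp [xhat]

lemma xhat_even_nonneg (x : Fin n → ℝ) (t : ℕ) (i : Fin n) : 0 ≤ xhat A x (2 * t) i := by
  cases t with
  | zero => rw [xhat_zero]
  | succ t => rw [xhat_even]; exact hi_nonneg _ _ _

lemma xhat_even_le (hne : ∀ i, (nhdX A i).Nonempty) (x : Fin n → ℝ) (hx : ∀ i, 0 ≤ x i) (t : ℕ) :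
    ∀ i, xhat A x (2 * t) i ≤ x i := by
  induction t with
  | zero => intro i; rw [xhat_zero]; exact hx i
  | succ t ih =>
    rw [xhat_even, xhat_odd]
    exact hi_le_self hne x hx (le_lo_self hne x ih)

lemma le_xhat_odd (hne : ∀ i, (nhdX A i).Nonempty) (x : Fin n → ℝ) (hx : ∀ i, 0 ≤ x i) (t : ℕ)
    (i : Fin n) : x i ≤ xhat A x (2 * t + 1) i := by
  rw [xhat_odd]
  exact le_lo_self hne x (xhat_even_le hne x hx t) i

lemma xhat_even_mono (hne : ∀ i, (nhdX A i).Nonempty) (x : Fin n → ℝ) (t : ℕ) :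
    ∀ i, xhat A x (2 * t) i ≤ xhat A x (2 * (t + 1)) i := by
  induction t with
  | zero => intro i; rw [xhat_zero]; exact xhat_even_nonneg x _ i
  | succ t ih =>
    intro i
    rw [xhat_even x (t + 1), xhat_even x t, xhat_odd x (t + 1), xhat_odd x t]
    exact hi_anti hne x (lo_anti hne x ih) i

lemma xhat_odd_anti (hne : ∀ i, (nhdX A i).Nonempty) (x : Fin n → ℝ) (t : ℕ) (i : Fin n) :
    xhat A x (2 * (t + 1) + 1) i ≤ xhat A x (2 * t + 1) i := by
  rw [xhat_odd x (t + 1), xhat_odd x t]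
  exact lo_anti hne x (xhat_even_mono hne x t) i

/-- error of lower estimates -/
noncomputable def er (A : Fin m → Fin n → Bool) (x : Fin n → ℝ) (t : ℕ) (i : Fin n) : ℝ :=
  x i - xhat A x (2 * t) i

/-- error of upper estimates -/
noncomputable def ur (A : Fin m → Fin n → Bool) (x : Fin n → ℝ) (t : ℕ) (i : Fin n) : ℝ :=
  xhat A x (2 * t + 1) i - x i

lemma ur_le (x : Fin n → ℝ) (t : ℕ) {l : Fin m} {i : Fin n} (h : l ∈ nhdX A i) :
    ur A x t i ≤ ∑ k ∈ (nhdY A l).erase i, er A x t k := by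
  have h1 := lo_le x (xhat A x (2 * t)) h
  rw [msg_eq x _ h] at h1
  unfold ur er
  rw [xhat_odd]
  linarith

lemma er_le (x : Fin n → ℝ) (t : ℕ) {l : Fin m} {i : Fin n} (h : l ∈ nhdX A i) :
    er A x (t + 1) i ≤ ∑ k ∈ (nhdY A l).erase i, ur A x t k := by
  have h1 := le_hi x (xhat A x (2 * t + 1)) h
  rw [msg_eq x _ h, Finset.sum_sub_distrib] at h1
  unfold ur er
  rw [xhat_even, Finset.sum_sub_distrib]
  linarith

/-- Splitting a check-sum along `T`. -/
lemma split_sum (T : Finset (Fin n)) {l : Fin m} {i : Fin n} (hiT : i ∈ T) (f : Fin n → ℝ) :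
    ∑ k ∈ (nhdY A l).erase i, f k =
      ∑ k ∈ (nhdY A l ∩ T).erase i, f k + ∑ k ∈ nhdY A l ∩ Tᶜ, f k := by
  rw [← Finset.sum_union]
  · refine Finset.sum_congr ?_ fun _ _ => rfl
    ext k
    simp only [mem_erase, mem_union, mem_inter, mem_compl]
    by_cases hk : k ∈ T
    · simp [hk]
    · have : k ≠ i := fun h => hk (h ▸ hiT)
      simp [hk, this]
  · rw [Finset.disjoint_left]
    intro k hk hk'
    simp only [mem_erase, mem_inter, mem_compl] at hk hk'
    exact hk'.2 hk.2.2

/-- Total noise bound. -/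
lemma noise_bound {c d : ℕ} (hc : ∀ i, (nhdX A i).card = c)
    (hd : ∀ l, (nhdY A l).card = d) (T : Finset (Fin n))
    (hT : ∀ i ∉ T, (nhdX A i ∩ Gam A T).card ≤ (nhdX A i \ Gam A T).card)
    (x u : Fin n → ℝ) (hx : ∀ i, 0 ≤ x i) (hu : ∀ i, 0 ≤ u i)
    (hux : ∀ i, ∀ l ∈ nhdX A i, u i ≤ ∑ k ∈ (nhdY A l).erase i, x k) :
    ∑ l ∈ Gam A T, ∑ k ∈ nhdY A l ∩ Tᶜ, (u k + x k) ≤ ((d : ℝ) - 1) * (c * ∑ k ∈ Tᶜ, x k) := by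
  classical
  have hA : ∑ l ∈ Gam A T, ∑ k ∈ nhdY A l ∩ Tᶜ, x k ≤
      ((d : ℝ) - 1) * ∑ l ∈ Gam A T, ∑ k ∈ nhdY A l ∩ Tᶜ, x k := by
    rw [Finset.mul_sum]
    refine Finset.sum_le_sum fun l hl => ?_
    obtain ⟨i, hi, hil⟩ := mem_Gam.1 hl
    have hs : 0 ≤ ∑ k ∈ nhdY A l ∩ Tᶜ, x k := Finset.sum_nonneg fun k _ => hx k
    rcases Finset.eq_empty_or_nonempty (nhdY A l ∩ Tᶜ) with h | ⟨j, hj⟩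
    · rw [h]; simp
    · rw [mem_inter, mem_compl] at hj
      have hij : i ≠ j := fun h => hj.2 (h ▸ hi)
      have h2 : 2 ≤ d := by
        rw [← hd l, ← Finset.card_pair hij]
        apply Finset.card_le_card
        intro a ha
        simp only [mem_insert, mem_singleton] at ha
        rcases ha with rfl | rfl
        · exact mem_nhdY.2 hil
        · exact hj.1
      have : (2 : ℝ) ≤ d := by exact_mod_cast h2
      nlinarith
  have hB : ∑ l ∈ Gam A T, ∑ k ∈ nhdY A l ∩ Tᶜ, u k ≤
      ((d : ℝ) - 1) * ∑ l ∈ (Gam A T)ᶜ, ∑ k ∈ nhdY A l ∩ Tᶜ, x k := by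
    calc ∑ l ∈ Gam A T, ∑ k ∈ nhdY A l ∩ Tᶜ, u k
        = ∑ k ∈ Tᶜ, ∑ l ∈ nhdX A k ∩ Gam A T, u k := sum_edges (fun _ k => u k) _ _
      _ ≤ ∑ k ∈ Tᶜ, ∑ l ∈ nhdX A k ∩ (Gam A T)ᶜ, ∑ k' ∈ (nhdY A l).erase k, x k' := by
          refine Finset.sum_le_sum fun k hk => ?_
          rw [mem_compl] at hk
          calc ∑ l ∈ nhdX A k ∩ Gam A T, u k ≤ ∑ l ∈ nhdX A k ∩ (Gam A T)ᶜ, u k := by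
                rw [Finset.sum_const, Finset.sum_const, nsmul_eq_mul, nsmul_eq_mul]
                have h1 := hT k hk
                rw [Finset.sdiff_eq_inter_compl] at h1
                exact mul_le_mul_of_nonneg_right (by exact_mod_cast h1) (hu k)
            _ ≤ _ := Finset.sum_le_sum fun l hl => hux k l (mem_inter.1 hl).1
      _ = ∑ l ∈ (Gam A T)ᶜ, ∑ k ∈ nhdY A l ∩ Tᶜ, ∑ k' ∈ (nhdY A l).erase k, x k' :=
          (sum_edges (fun l k => ∑ k' ∈ (nhdY A l).erase k, x k') _ _).symm
      _ ≤ _ := by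
          rw [Finset.mul_sum]
          refine Finset.sum_le_sum fun l hl => le_of_eq ?_
          have hl' : nhdY A l ∩ Tᶜ = nhdY A l := by
            rw [Finset.inter_eq_left]
            intro k hk
            rw [mem_compl]
            intro hkT
            exact (mem_compl.1 hl) (mem_Gam.2 ⟨k, hkT, mem_nhdY.1 hk⟩)
          rw [hl']
          have : ∀ k ∈ nhdY A l, ∑ k' ∈ (nhdY A l).erase k, x k' = ∑ k' ∈ nhdY A l, x k' - x k := by
            intro k hk
            rw [← Finset.add_sum_erase _ x hk]; ring
          rw [Finset.sum_congr rfl this, Finset.sum_sub_distrib, Finset.sum_const, hd,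
            nsmul_eq_mul]
          ring
  rw [← double_count hc, ← Finset.sum_add_sum_compl (Gam A T)]
  simp only [Finset.sum_add_distrib]
  linarith

/-- Purely numerical bookkeeping. -/
lemma numerics (ε : ℝ) (hε : 0 < ε) : ∃ C : ℝ, 0 < C ∧ ∀ c d k t : ℕ, 0 < c → 0 < d → 0 < k →
    C * (1 + Real.log ((k : ℝ) + 1)) * (1 + Real.log ((c : ℝ) * d)) ≤ (t : ℝ) →
    ∃ r s : ℕ, t = r + s ∧ (k : ℝ) / (2 * ε) * Real.exp (-(2 * ε) * r) < 1 ∧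
      (k : ℝ) * (d : ℝ) ^ (r + 1) * c ≤ (1 + 2 * ε) ^ s := by
  set a : ℝ := (1 + |Real.log (2 * ε)|) / (2 * ε) with ha
  set L : ℝ := Real.log (1 + 2 * ε) with hL
  have hLpos : 0 < L := Real.log_pos (by linarith)
  have hapos : 0 < a := by positivity
  refine ⟨(a + 1) + (a + 4) / L, by positivity, ?_⟩
  intro c d k t hc hd hk ht
  have hc1 : (1 : ℝ) ≤ c := by exact_mod_cast hc
  have hd1 : (1 : ℝ) ≤ d := by exact_mod_cast hd
  have hk1 : (1 : ℝ) ≤ k := by exact_mod_cast hk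
  have hlogc := Real.log_nonneg hc1
  have hlogd := Real.log_nonneg hd1
  have hlogk := Real.log_nonneg hk1
  have hlogk' : Real.log k ≤ Real.log ((k : ℝ) + 1) := Real.log_le_log (by linarith) (by linarith)
  have hcd : Real.log ((c : ℝ) * d) = Real.log c + Real.log d :=
    Real.log_mul (by linarith) (by linarith)
  set K : ℝ := 1 + Real.log ((k : ℝ) + 1) with hK
  set P : ℝ := 1 + Real.log ((c : ℝ) * d) with hP
  have hK1 : 1 ≤ K := by linarith
  have hP1 : 1 ≤ P := by linarith
  have hKP : K ≤ K * P := le_mul_of_one_le_right (by linarith) hP1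
  have hPK : P ≤ K * P := le_mul_of_one_le_left (by linarith) hK1
  have hr1 : a * K ≤ (⌈a * K⌉₊ : ℝ) := Nat.le_ceil _
  have hr2 : (⌈a * K⌉₊ : ℝ) < a * K + 1 := Nat.ceil_lt_add_one (by positivity)
  set r := ⌈a * K⌉₊ with hr
  have hrle : (r : ℝ) ≤ (a + 1) * K := by nlinarith
  have haKP : (a + 1) * K ≤ (a + 1) * (K * P) := mul_le_mul_of_nonneg_left hKP (by linarith)
  have hpos4 : 0 ≤ (a + 4) / L * (K * P) := by positivity
  have hrt : r ≤ t := by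
    have : (r : ℝ) ≤ t := by nlinarith
    exact_mod_cast this
  refine ⟨r, t - r, by omega, ?_, ?_⟩
  · have h2 : (0 : ℝ) < k / (2 * ε) := by positivity
    rw [← Real.exp_log h2, ← Real.exp_add, Real.exp_lt_one_iff,
      Real.log_div (by linarith) (by positivity)]
    have h3 : 2 * ε * (a * K) ≤ 2 * ε * r := mul_le_mul_of_nonneg_left hr1 (by linarith)
    have h4 : 2 * ε * (a * K) = (1 + |Real.log (2 * ε)|) * K := by
      rw [ha]; field_simp
    have h5 := neg_abs_le (Real.log (2 * ε))
    have h6 : |Real.log (2 * ε)| ≤ |Real.log (2 * ε)| * K :=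
      le_mul_of_one_le_right (abs_nonneg _) hK1
    nlinarith
  · have hcast : ((t - r : ℕ) : ℝ) = t - r := Nat.cast_sub hrt
    have hs : (a + 4) * (K * P) ≤ ((t - r : ℕ) : ℝ) * L := by
      rw [hcast]
      have h1 : (a + 4) / L * (K * P) ≤ (t : ℝ) - r := by nlinarith
      have h2 := mul_le_mul_of_nonneg_right h1 hLpos.le
      have h3 : (a + 4) / L * (K * P) * L = (a + 4) * (K * P) := by field_simp
      linarith
    rw [← Real.log_le_log_iff (by positivity) (by positivity), Real.log_pow,
      Real.log_mul (by positivity) (by positivity), Real.log_mul (by positivity) (by positivity),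
      Real.log_pow]
    have h7 : ((r + 1 : ℕ) : ℝ) * Real.log d ≤ (a + 2) * K * P := by
      apply mul_le_mul
      · push_cast; nlinarith
      · linarith
      · exact hlogd
      · positivity
    nlinarith

end MPaux

/-- **Theorem 2 (ℓ₁/ℓ₁ approximate recovery).**
If `G` is a `(c,d)`-regular `(⌊k/(2ε)+1⌋, 1/2+ε)`-expander and `x ∈ ℝ₊ⁿ`, then there is a
constant `C` depending only on `ε` such that for every `t ≥ C(1+log(k+1))(1+log(cd))`,
`‖x - x̂^{2t}‖₁ ≤ (1 + d/(2ε))·‖x - x⁽ᵏ⁾‖₁`. -/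
theorem l1_l1_approximate_recovery (ε : ℝ) (hε : 0 < ε) :
    ∃ C : ℝ, 0 < C ∧
      ∀ (n m c d k : ℕ), 0 < n → 0 < m → 0 < c → 0 < d → 0 < k →
        ∀ A : Fin m → Fin n → Bool,
          IsRegular A c d →
          IsExpander A c (Nat.floor ((k : ℝ) / (2 * ε) + 1)) (1 / 2 + ε) →
          ∀ x xk : Fin n → ℝ, (∀ i, 0 ≤ x i) → BestKSparse k x xk →
            ∀ t : ℕ,
              C * (1 + Real.log ((k : ℝ) + 1)) * (1 + Real.log ((c : ℝ) * d)) ≤ (t : ℝ) →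
              l1 (fun i => x i - xhat A x (2 * t) i) ≤
                (1 + (d : ℝ) / (2 * ε)) * l1 (fun i => x i - xk i) := by
  obtain ⟨C, hC, hnum⟩ := MPaux.numerics ε hε
  refine ⟨C, hC, ?_⟩
  intro n m c d k hn hm hc0 hd0 hk0 A hreg hexp x xk hx hbest t ht
  obtain ⟨hc, hd⟩ := hreg
  obtain ⟨r, s, rfl, hr, hs⟩ := hnum c d k t hc0 hd0 hk0 ht
  have hcpos : (0 : ℝ) < c := by exact_mod_cast hc0
  have hd1 : (1 : ℝ) ≤ d := by exact_mod_cast hd0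
  have hkpos : (0 : ℝ) < k := by exact_mod_cast hk0
  have hne : ∀ i, (nhdX A i).Nonempty := fun i => by
    rw [← Finset.card_pos, hc]; exact hc0
  set K := Nat.floor ((k : ℝ) / (2 * ε) + 1) with hKdef
  have hdivpos : (0 : ℝ) < (k : ℝ) / (2 * ε) := by positivity
  have hKgt : (k : ℝ) / (2 * ε) < K := by
    have := Nat.lt_floor_add_one ((k : ℝ) / (2 * ε) + 1)
    rw [← hKdef] at this
    linarith
  have hKle : (K : ℝ) ≤ (k : ℝ) / (2 * ε) + 1 := Nat.floor_le (by positivity)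
  have hK1 : 1 ≤ K := by
    have : (0 : ℝ) < K := by linarith
    exact_mod_cast this
  have hε2 : ε ≤ 1 / 2 := by
    have h1 := hexp {⟨0, hn⟩} (by simpa using hK1)
    have h2 : (Gam A {⟨0, hn⟩}).card = c := by
      simp [Gam, hc]
    rw [h2] at h1
    simp only [Finset.card_singleton, Nat.cast_one, mul_one] at h1
    by_contra hcon
    push Not at hcon
    nlinarith
  have hK2 : (k : ℝ) < 2 * ε * K := by
    rw [div_lt_iff₀ (by positivity)] at hKgt
    linarith
  have hkK : k < K := by
    have h1 : (k : ℝ) < K := by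
      have : (0 : ℝ) ≤ K := by positivity
      nlinarith
    exact_mod_cast h1
  obtain ⟨T, hST, hTK, hT⟩ := MPaux.exists_closure hc0 hc hkK hK2 hexp
    (Finset.univ.filter (fun i => xk i ≠ 0)) hbest.2.1
  have hTcard : (T.card : ℝ) ≤ (k : ℝ) / (2 * ε) := by
    have : ((T.card + 1 : ℕ) : ℝ) ≤ K := by exact_mod_cast hTK
    push_cast at this
    linarith
  have hexpT : ∀ S ⊆ T, (1 / 2 + ε) * c * S.card ≤ ((Gam A S).card : ℝ) := fun S hS =>
    hexp S ((Finset.card_le_card hS).trans hTK.le)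
  set Δ := l1 (fun i => x i - xk i) with hΔ
  have hΔ0 : 0 ≤ Δ := Finset.sum_nonneg fun i _ => abs_nonneg _
  have hδ : ∑ i ∈ Tᶜ, x i ≤ Δ := by
    calc ∑ i ∈ Tᶜ, x i ≤ ∑ i ∈ Tᶜ, |x i - xk i| := by
          refine Finset.sum_le_sum fun i hi => ?_
          have : xk i = 0 := by
            by_contra hcon
            exact (Finset.mem_compl.1 hi) (hST (by simpa using hcon))
          rw [this, sub_zero]
          exact le_abs_self _
      _ ≤ _ := Finset.sum_le_sum_of_subset_of_nonneg (Finset.subset_univ _)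
          fun i _ _ => abs_nonneg _
  -- errors
  have he0 : ∀ t i, 0 ≤ MPaux.er A x t i := fun t i =>
    sub_nonneg.2 (MPaux.xhat_even_le hne x hx t i)
  have hex : ∀ t i, MPaux.er A x t i ≤ x i := fun t i =>
    sub_le_self _ (MPaux.xhat_even_nonneg x t i)
  have hu0 : ∀ t i, 0 ≤ MPaux.ur A x t i := fun t i =>
    sub_nonneg.2 (MPaux.le_xhat_odd hne x hx t i)
  have hemono : ∀ t i, MPaux.er A x (t + 1) i ≤ MPaux.er A x t i := fun t i =>
    sub_le_sub_left (MPaux.xhat_even_mono hne x t i) _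
  have humono : ∀ t i, MPaux.ur A x (t + 1) i ≤ MPaux.ur A x t i := fun t i =>
    sub_le_sub_right (MPaux.xhat_odd_anti hne x t i) _
  have huz : ∀ t i, MPaux.ur A x t i ≤ MPaux.ur A x 0 i := fun t i =>
    antitone_nat_of_succ_le (f := fun t => MPaux.ur A x t i) (fun t => humono t i) (Nat.zero_le t)
  set w : ℕ → Fin n → ℝ := fun t i => max (MPaux.er A x t i) (MPaux.ur A x t i) with hw
  have hw0 : ∀ t i, 0 ≤ w t i := fun t i => le_max_of_le_left (he0 t i)
  have hwmono : ∀ t i, w (t + 1) i ≤ w t i := fun t i => max_le_max (hemono t i) (humono t i)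
  set ν : Fin m → ℝ := fun l => ∑ i ∈ nhdY A l ∩ Tᶜ, (MPaux.ur A x 0 i + x i) with hν
  have hν0 : ∀ l, 0 ≤ ν l := fun l =>
    Finset.sum_nonneg fun i _ => add_nonneg (hu0 0 i) (hx i)
  have hNle : ∑ l ∈ Gam A T, ν l ≤ ((d : ℝ) - 1) * (c * Δ) := by
    refine (MPaux.noise_bound hc hd T hT x (MPaux.ur A x 0) hx (hu0 0) ?_).trans ?_
    · intro i l hl
      exact (MPaux.ur_le x 0 hl).trans (Finset.sum_le_sum fun j _ => hex 0 j)
    · exact mul_le_mul_of_nonneg_left (mul_le_mul_of_nonneg_left hδ hcpos.le) (by linarith)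
  have hstep : ∀ t, ∀ i ∈ T, ∀ l ∈ nhdX A i,
      w (t + 1) i ≤ ∑ j ∈ (nhdY A l ∩ T).erase i, w t j + ν l := by
    intro t i hi l hl
    apply max_le
    · refine (MPaux.er_le x t hl).trans ?_
      rw [MPaux.split_sum T hi]
      refine add_le_add (Finset.sum_le_sum fun j _ => le_max_right _ _)
        (Finset.sum_le_sum fun j _ => ?_)
      have := huz t j
      have := hx j
      linarith
    · refine (MPaux.ur_le x (t + 1) hl).trans ?_
      rw [MPaux.split_sum T hi]
      refine add_le_add
        (Finset.sum_le_sum fun j _ => (hemono t j).trans (le_max_left _ _))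
        (Finset.sum_le_sum fun j _ => ?_)
      have := hex (t + 1) j
      have := hu0 0 j
      linarith
  -- peeling phase
  have hNN : 0 ≤ ((d : ℝ) - 1) * (c * Δ) := mul_nonneg (by linarith) (by positivity)
  obtain ⟨S, hS, hScard, hSw⟩ := MPaux.peel_iter hc0 hd0 hc hd hε2 hexpT w hwmono ν
    (((d : ℝ) - 1) * (c * Δ)) hNN
    (fun l hl => (Finset.single_le_sum (fun l _ => hν0 l) hl).trans hNle) hstep r
  have hSempty : S = ∅ := by
    rw [← Finset.card_eq_zero]
    have h1 : (1 - 2 * ε) ^ r ≤ Real.exp (-(2 * ε) * r) := by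
      rw [mul_comm (-(2 * ε)) (r : ℝ), Real.exp_nat_mul]
      apply pow_le_pow_left₀ (by linarith)
      have := Real.add_one_le_exp (-(2 * ε))
      linarith
    have h2 : (S.card : ℝ) < 1 := by
      calc (S.card : ℝ) ≤ (1 - 2 * ε) ^ r * T.card := hScard
        _ ≤ Real.exp (-(2 * ε) * r) * ((k : ℝ) / (2 * ε)) :=
          mul_le_mul h1 hTcard (by positivity) (Real.exp_nonneg _)
        _ < 1 := by rw [mul_comm]; exact hr
    have h3 : S.card < 1 := by exact_mod_cast h2
    omega
  have hWr : ∑ i ∈ T, w r i ≤ (k : ℝ) / (2 * ε) * ((d : ℝ) ^ r * (d * (c * Δ))) := by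
    calc ∑ i ∈ T, w r i ≤ ∑ i ∈ T, (d : ℝ) ^ r * (((d : ℝ) - 1) * (c * Δ)) :=
          Finset.sum_le_sum fun i hi => hSw i hi (by simp [hSempty])
      _ = T.card * ((d : ℝ) ^ r * (((d : ℝ) - 1) * (c * Δ))) := by
          rw [Finset.sum_const, nsmul_eq_mul]
      _ ≤ _ := by
          apply mul_le_mul hTcard _ (by positivity) hdivpos.le
          apply mul_le_mul_of_nonneg_left _ (by positivity)
          apply mul_le_mul_of_nonneg_right _ (by positivity)
          linarith
  -- contraction phase
  set V : ℝ := ((d : ℝ) - 1) * Δ / (2 * ε) with hV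
  have hVeq : 2 * ε * V = ((d : ℝ) - 1) * Δ := by rw [hV]; field_simp
  have hV0 : 0 ≤ V := div_nonneg (mul_nonneg (by linarith) hΔ0) (by linarith)
  have hcontr : ∀ q : ℕ, (1 + 2 * ε) ^ q * (∑ i ∈ T, w (r + q) i - V) ≤ ∑ i ∈ T, w r i := by
    intro q
    induction q with
    | zero => simp [hV0]
    | succ q ih =>
      have h1 := MPaux.contraction hc hexpT (w (r + q)) (w (r + q + 1)) (hw0 _) (hwmono _) ν
        (hstep (r + q))
      have h2 : (c : ℝ) * ((1 + 2 * ε) * ∑ i ∈ T, w (r + q + 1) i) ≤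
          c * (∑ i ∈ T, w (r + q) i + ((d : ℝ) - 1) * Δ) := by linarith
      have h3 := le_of_mul_le_mul_left h2 hcpos
      rw [← add_assoc, pow_succ, mul_assoc]
      refine le_trans (mul_le_mul_of_nonneg_left ?_ (by positivity)) ih
      linarith
  have hfin : ∑ i ∈ T, w (r + s) i ≤ V + Δ / (2 * ε) := by
    have h1 := (hcontr s).trans hWr
    have h2 : (k : ℝ) / (2 * ε) * ((d : ℝ) ^ r * (d * (c * Δ))) =
        (k : ℝ) * (d : ℝ) ^ (r + 1) * c * (Δ / (2 * ε)) := by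
      rw [pow_succ]; ring
    rw [h2] at h1
    have h3 : (k : ℝ) * (d : ℝ) ^ (r + 1) * c * (Δ / (2 * ε)) ≤ (1 + 2 * ε) ^ s * (Δ / (2 * ε)) :=
      mul_le_mul_of_nonneg_right hs (by positivity)
    have h4 := le_of_mul_le_mul_left (h1.trans h3) (by positivity)
    linarith
  have hl1 : l1 (fun i => x i - xhat A x (2 * (r + s)) i) =
      ∑ i ∈ T, MPaux.er A x (r + s) i + ∑ i ∈ Tᶜ, MPaux.er A x (r + s) i := by
    rw [Finset.sum_add_sum_compl]
    exact Finset.sum_congr rfl fun i _ => abs_of_nonneg (he0 (r + s) i)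
  have hA1 : ∑ i ∈ T, MPaux.er A x (r + s) i ≤ ∑ i ∈ T, w (r + s) i :=
    Finset.sum_le_sum fun i _ => le_max_left _ _
  have hA2 : ∑ i ∈ Tᶜ, MPaux.er A x (r + s) i ≤ ∑ i ∈ Tᶜ, x i :=
    Finset.sum_le_sum fun i _ => hex _ i
  have hVs : V + Δ / (2 * ε) = (d : ℝ) / (2 * ε) * Δ := by rw [hV]; ring
  rw [hl1]
  linarith
end

section
/- Lemma (per-iteration error contraction). Let ε > 0 and suppose G is a (c,d)-regular (⌊k/(2ε)+1⌋, 1/2+ε)-expander. Let x ∈ ℝ₊ⁿ and run the message-passing algorithm on y = Ax. Then for every t ≥ 0, Err_{X_+}^{2t+2} ≤ ((1−2ε)/(1+2ε))·Err_{X_+}^{2t} + (2d/(1+2ε))·Err_{X_0}^{2t}. -/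
open Finset

open MP Finset

/- HELPERS -/

lemma mp_mem {n m : ℕ} (A : Fin m → Fin n → Bool) (i : Fin n) (j : Fin m) :
    j ∈ nhdX A i ↔ i ∈ nhdY A j := by
  simp [nhdX, nhdY]

lemma mp_expand {n m : ℕ} (A : Fin m → Fin n → Bool) (c kk : ℕ) (α : ℝ)
    (hexp : IsExpander A c kk α) :
    ∀ (N : ℕ) (S : Finset (Fin n)) (f : Fin n → ℝ) (F : Fin m → ℝ), S.card = N → N ≤ kk →
      (∀ i ∈ S, 0 ≤ f i) → (∀ i ∈ S, ∀ j ∈ nhdX A i, f i ≤ F j) →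
      α * c * ∑ i ∈ S, f i ≤ ∑ j ∈ Gam A S, F j := by
  intro N
  induction N with
  | zero =>
    intro S f F hS _ _ _
    have : S = ∅ := Finset.card_eq_zero.mp hS
    subst this
    simp [Gam]
  | succ N ih =>
    intro S f F hS hN hf hF
    have hne : S.Nonempty := by
      rw [← Finset.card_pos]; omega
    obtain ⟨i0, hi0, hmin⟩ := Finset.exists_min_image S f hne
    have hsub : Gam A (S.erase i0) ⊆ Gam A S :=
      Finset.biUnion_subset_biUnion_of_subset_left _ (Finset.erase_subset _ _)
    have h1 := ih (S.erase i0) (fun i => f i - f i0) (fun j => F j - f i0)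
      (by rw [Finset.card_erase_of_mem hi0]; omega) (by omega)
      (fun i hi => sub_nonneg.mpr (hmin i (Finset.mem_of_mem_erase hi)))
      (fun i hi j hj => by
        have := hF i (Finset.mem_of_mem_erase hi) j hj
        linarith)
    have h2 : ∑ j ∈ Gam A (S.erase i0), (F j - f i0) ≤ ∑ j ∈ Gam A S, (F j - f i0) := by
      apply Finset.sum_le_sum_of_subset_of_nonneg hsub
      intro j hj _
      obtain ⟨i, hi, hij⟩ := Finset.mem_biUnion.mp hj
      have := hF i hi j hij
      have := hmin i hi
      linarith
    have h3 : ∑ i ∈ S.erase i0, (f i - f i0) = ∑ i ∈ S, (f i - f i0) := by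
      rw [← Finset.add_sum_erase S _ hi0]; simp
    have h4 := hexp S (by omega)
    have h5 := mul_le_mul_of_nonneg_right h4 (hf i0 hi0)
    rw [h3] at h1
    have h6 := h1.trans h2
    rw [Finset.sum_sub_distrib, Finset.sum_sub_distrib, Finset.sum_const, Finset.sum_const,
      nsmul_eq_mul, nsmul_eq_mul, mul_sub] at h6
    linarith

lemma mp_dc {n m : ℕ} (A : Fin m → Fin n → Bool) (T : Finset (Fin m)) (e : Fin n → ℝ) :
    ∑ j ∈ T, ∑ i ∈ nhdY A j, e i = ∑ i, ((nhdX A i ∩ T).card : ℝ) * e i := by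
  rw [Finset.sum_comm' (t' := Finset.univ) (s' := fun i => nhdX A i ∩ T)]
  · simp
  · intro j i
    simp only [Finset.mem_inter, Finset.mem_univ, mp_mem]
    tauto

lemma mp_dc2 {n m : ℕ} (A : Fin m → Fin n → Bool) (S : Finset (Fin n)) (T : Finset (Fin m))
    (F : Fin m → ℝ) (d : ℕ) (hd : ∀ j, (nhdY A j).card = d) (hF : ∀ j, 0 ≤ F j) :
    ∑ i ∈ S, ∑ j ∈ nhdX A i ∩ T, F j ≤ d * ∑ j ∈ T, F j := by
  rw [Finset.sum_comm' (t' := T) (s' := fun j => nhdY A j ∩ S)]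
  · rw [Finset.mul_sum]
    apply Finset.sum_le_sum
    intro j _
    rw [Finset.sum_const, nsmul_eq_mul]
    apply mul_le_mul_of_nonneg_right _ (hF j)
    rw [← hd j]
    exact_mod_cast Finset.card_le_card Finset.inter_subset_left
  · intro i j
    simp only [Finset.mem_inter, mp_mem]
    tauto

/-- Closure of `P` under adding vertices with at least half of their neighbours covered. -/
lemma mp_closure {n m c k : ℕ} (hn : 0 < n) (hc : 0 < c)
    (A : Fin m → Fin n → Bool) (ε : ℝ) (hε : 0 < ε)
    (hX : ∀ i, (nhdX A i).card = c)
    (hexp : IsExpander A c (Nat.floor ((k : ℝ) / (2 * ε) + 1)) (1 / 2 + ε))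
    (P : Finset (Fin n)) (hP : P.card ≤ k) :
    ε ≤ 1 / 2 ∧ ∃ S : Finset (Fin n), P ⊆ S ∧ S.card ≤ Nat.floor ((k : ℝ) / (2 * ε) + 1) ∧
      ∀ i ∉ S, 2 * (nhdX A i ∩ Gam A S).card ≤ c := by
  set kk := Nat.floor ((k : ℝ) / (2 * ε) + 1) with hkk
  have hcR : (0 : ℝ) < c := by exact_mod_cast hc
  have hq : 0 ≤ (k : ℝ) / (2 * ε) := by positivity
  have hkk1 : 1 ≤ kk := Nat.le_floor (by push_cast; linarith)
  have hlt : (k : ℝ) / (2 * ε) < kk := by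
    have := Nat.lt_floor_add_one ((k : ℝ) / (2 * ε) + 1)
    rw [← hkk] at this
    linarith
  have hlt2 : (k : ℝ) < kk * (2 * ε) := (div_lt_iff₀ (by positivity)).mp hlt
  have hε2 : ε ≤ 1 / 2 := by
    have h := hexp {⟨0, hn⟩} (by simpa using hkk1)
    simp only [Gam, Finset.singleton_biUnion, hX, Finset.card_singleton, Nat.cast_one, mul_one] at h
    have : (1 / 2 + ε) * c ≤ 1 * c := by linarith
    have := le_of_mul_le_mul_right this hcR
    linarith
  have hkkk : k ≤ kk := by
    have : (k : ℝ) ≤ kk := by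
      have : (kk : ℝ) * (2 * ε) ≤ kk * 1 := by
        apply mul_le_mul_of_nonneg_left _ (Nat.cast_nonneg _)
        linarith
      linarith
    exact_mod_cast this
  refine ⟨hε2, ?_⟩
  let Fam := (Finset.univ : Finset (Finset (Fin n))).filter
    (fun S => P ⊆ S ∧ S.card ≤ kk ∧ 2 * (Gam A S).card ≤ c * (S.card + P.card))
  have hPF : P ∈ Fam := by
    simp only [Fam, Finset.mem_filter, Finset.mem_univ, true_and]
    refine ⟨subset_rfl, hP.trans hkkk, ?_⟩
    have : (Gam A P).card ≤ P.card * c := Finset.card_biUnion_le_card_mul _ _ _ (fun i _ => (hX i).le)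
    nlinarith
  obtain ⟨S, hSF, hmax⟩ := Finset.exists_max_image Fam Finset.card ⟨P, hPF⟩
  simp only [Fam, Finset.mem_filter, Finset.mem_univ, true_and] at hSF
  obtain ⟨hPS, hSk, hSG⟩ := hSF
  have hSlt : S.card < kk := by
    rcases hSk.lt_or_eq with h | h
    · exact h
    exfalso
    have h1 := hexp S hSk
    have h2 : (2 : ℝ) * (Gam A S).card ≤ c * (S.card + P.card) := by exact_mod_cast hSG
    rw [h] at h1 h2
    have h3 : (P.card : ℝ) ≤ k := by exact_mod_cast hP
    have h4 : (c : ℝ) * (kk * (2 * ε)) ≤ c * P.card := by nlinarith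
    have := le_of_mul_le_mul_left h4 hcR
    linarith
  refine ⟨S, hPS, hSk, ?_⟩
  intro i hi
  by_contra hcon
  push Not at hcon
  have hG : Gam A (insert i S) = nhdX A i ∪ Gam A S := by simp [Gam, Finset.biUnion_insert]
  have hcard := Finset.card_union_add_card_inter (nhdX A i) (Gam A S)
  rw [hX] at hcard
  have hins := Finset.card_insert_of_notMem hi
  have : insert i S ∈ Fam := by
    simp only [Fam, Finset.mem_filter, Finset.mem_univ, true_and]
    refine ⟨hPS.trans (Finset.subset_insert _ _), by omega, ?_⟩
    rw [hG, hins]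
    have : c * (S.card + 1 + P.card) = c * (S.card + P.card) + c := by ring
    omega
  have := hmax _ this
  omega

lemma mp_core {n m c d k : ℕ} (hn : 0 < n) (hc : 0 < c) (hd : 0 < d)
    (A : Fin m → Fin n → Bool) (ε : ℝ) (hε : 0 < ε)
    (hreg : IsRegular A c d)
    (hexp : IsExpander A c (Nat.floor ((k : ℝ) / (2 * ε) + 1)) (1 / 2 + ε))
    (P : Finset (Fin n)) (hP : P.card ≤ k) (e o r : Fin n → ℝ)
    (he : ∀ i, 0 ≤ e i) (ho : ∀ i, 0 ≤ o i) (hr : ∀ i, 0 ≤ r i)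
    (h1 : ∀ i, ∀ j ∈ nhdX A i, o i + e i ≤ ∑ l ∈ nhdY A j, e l)
    (h2 : ∀ i, ∀ j ∈ nhdX A i, r i + o i ≤ ∑ l ∈ nhdY A j, o l) :
    ∑ i ∈ P, r i ≤ (1 - 2 * ε) / (1 + 2 * ε) * ∑ i ∈ P, e i +
      2 * (d : ℝ) / (1 + 2 * ε) * ∑ i ∈ Finset.univ \ P, e i := by
  obtain ⟨hX, hY⟩ := hreg
  obtain ⟨hε2, S, hPS, hSk, hS⟩ := mp_closure hn hc A ε hε hX hexp P hP
  have hcR : (0 : ℝ) < c := by exact_mod_cast hc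
  have hdR : (1 : ℝ) ≤ d := by exact_mod_cast hd
  have hgS : ∀ i ∈ S, nhdX A i ∩ Gam A S = nhdX A i := fun i hi =>
    Finset.inter_eq_left.mpr (Finset.subset_biUnion_of_mem (nhdX A) hi)
  have split : ∀ f : Fin n → ℝ, ∑ j ∈ Gam A S, ∑ i ∈ nhdY A j, f i =
      c * ∑ i ∈ S, f i + ∑ i ∈ Sᶜ, ((nhdX A i ∩ Gam A S).card : ℝ) * f i := by
    intro f
    rw [mp_dc, ← Finset.sum_add_sum_compl S, Finset.mul_sum]
    congr 1
    apply Finset.sum_congr rfl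
    intro i hi
    rw [hgS i hi, hX]
  have hA := mp_expand A c _ _ hexp _ S (fun i => o i + e i) (fun j => ∑ l ∈ nhdY A j, e l)
    rfl hSk (fun i _ => add_nonneg (ho i) (he i)) (fun i _ => h1 i)
  have hB := mp_expand A c _ _ hexp _ S (fun i => r i + o i) (fun j => ∑ l ∈ nhdY A j, o l)
    rfl hSk (fun i _ => add_nonneg (hr i) (ho i)) (fun i _ => h2 i)
  rw [split, Finset.sum_add_distrib] at hA hB
  -- bound o outside S
  have hgh : ∀ i, ((nhdX A i ∩ Gam A S).card : ℝ) + ((nhdX A i ∩ (Gam A S)ᶜ).card : ℝ) = c := by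
    intro i
    rw [← hX i]
    have := Finset.card_inter_add_card_sdiff (nhdX A i) (Gam A S)
    rw [Finset.sdiff_eq_inter_compl] at this
    exact_mod_cast this
  have hg : ∀ i ∈ Sᶜ, 2 * ((nhdX A i ∩ Gam A S).card : ℝ) ≤ c := by
    intro i hi
    exact_mod_cast hS i (Finset.mem_compl.mp hi)
  have hEnn : ∀ j, 0 ≤ ∑ l ∈ nhdY A j, e l := fun j => Finset.sum_nonneg (fun i _ => he i)
  have hC1 : ∑ i ∈ Sᶜ, ((nhdX A i ∩ Gam A S).card : ℝ) * o i ≤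
      ∑ i ∈ Sᶜ, ∑ j ∈ nhdX A i ∩ (Gam A S)ᶜ, ∑ l ∈ nhdY A j, e l := by
    apply Finset.sum_le_sum
    intro i hi
    have a1 : ((nhdX A i ∩ (Gam A S)ᶜ).card : ℝ) * o i ≤
        ∑ j ∈ nhdX A i ∩ (Gam A S)ᶜ, ∑ l ∈ nhdY A j, e l := by
      rw [← nsmul_eq_mul]
      apply Finset.card_nsmul_le_sum
      intro j hj
      have := h1 i j (Finset.mem_inter.mp hj).1
      have := he i
      linarith
    refine le_trans (mul_le_mul_of_nonneg_right ?_ (ho i)) a1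
    have := hgh i
    have := hg i hi
    linarith
  have hC2 := mp_dc2 A Sᶜ (Gam A S)ᶜ (fun j => ∑ l ∈ nhdY A j, e l) d hY hEnn
  have hH : ∑ j ∈ (Gam A S)ᶜ, ∑ l ∈ nhdY A j, e l =
      ∑ i ∈ Sᶜ, ((nhdX A i ∩ (Gam A S)ᶜ).card : ℝ) * e i := by
    rw [mp_dc, ← Finset.sum_add_sum_compl S]
    rw [Finset.sum_eq_zero, zero_add]
    intro i hi
    have := hgh i
    rw [hgS i hi, hX] at this
    have : ((nhdX A i ∩ (Gam A S)ᶜ).card : ℝ) = 0 := by linarith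
    rw [this, zero_mul]
  have hGH : ∑ i ∈ Sᶜ, ((nhdX A i ∩ Gam A S).card : ℝ) * e i +
      ∑ i ∈ Sᶜ, ((nhdX A i ∩ (Gam A S)ᶜ).card : ℝ) * e i = c * ∑ i ∈ Sᶜ, e i := by
    rw [← Finset.sum_add_distrib, Finset.mul_sum]
    apply Finset.sum_congr rfl
    intro i _
    rw [← add_mul, hgh]
  have hG0 : 0 ≤ ∑ i ∈ Sᶜ, ((nhdX A i ∩ Gam A S).card : ℝ) * e i :=
    Finset.sum_nonneg fun i _ => mul_nonneg (Nat.cast_nonneg _) (he i)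
  rw [hH] at hC2
  have hO0 : 0 ≤ ∑ i ∈ S, o i := Finset.sum_nonneg fun i _ => ho i
  have hQ0 : 0 ≤ ∑ i ∈ S \ P, e i := Finset.sum_nonneg fun i _ => he i
  have hEs : ∑ i ∈ S, e i = ∑ i ∈ S \ P, e i + ∑ i ∈ P, e i := (Finset.sum_sdiff hPS).symm
  have hE0 : ∑ i ∈ Finset.univ \ P, e i = ∑ i ∈ S \ P, e i + ∑ i ∈ Sᶜ, e i := by
    have u1 := Finset.sum_sdiff (f := e) (Finset.subset_univ P)
    have u2 := Finset.sum_add_sum_compl S e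
    linarith
  have hR : ∑ i ∈ P, r i ≤ ∑ i ∈ S, r i :=
    Finset.sum_le_sum_of_subset_of_nonneg hPS fun i _ _ => hr i
  have hB' := hC1.trans hC2
  rw [hE0]
  rw [hEs] at hA
  generalize ∑ i ∈ Sᶜ, ((nhdX A i ∩ Gam A S).card : ℝ) * e i = G at *
  generalize ∑ i ∈ Sᶜ, ((nhdX A i ∩ (Gam A S)ᶜ).card : ℝ) * e i = H at *
  generalize ∑ i ∈ Sᶜ, ((nhdX A i ∩ Gam A S).card : ℝ) * o i = K at *
  generalize ∑ i ∈ S \ P, e i = Q at *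
  generalize ∑ i ∈ Sᶜ, e i = W at *
  generalize ∑ i ∈ P, e i = Ep at *
  generalize ∑ i ∈ P, r i = Rp at *
  generalize ∑ i ∈ S, r i = R at *
  generalize ∑ i ∈ S, o i = O at *
  have hdc : (d : ℝ) * (G + H) = d * (c * W) := by rw [hGH]
  have t1 : G ≤ d * G := le_mul_of_one_le_left hG0 hdR
  have t2 : 0 ≤ ε * (c * O) := by positivity
  have t3 : 0 ≤ (c : ℝ) * Q := by positivity
  have t4 : (c : ℝ) * Q ≤ d * (c * Q) := le_mul_of_one_le_left t3 hdR
  have t5 : 0 ≤ ε * (c * Q) := by positivity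
  have t6 : (1 / 2 + ε) * c * Rp ≤ (1 / 2 + ε) * c * R :=
    mul_le_mul_of_nonneg_left hR (by positivity)
  have key : (c : ℝ) * ((1 + 2 * ε) * Rp) ≤ c * ((1 - 2 * ε) * Ep + 2 * d * (Q + W)) := by
    nlinarith
  have key2 := le_of_mul_le_mul_left key hcR
  have hpos : 0 < 1 + 2 * ε := by linarith
  rw [div_mul_eq_mul_div, div_mul_eq_mul_div, ← add_div, le_div_iff₀ hpos]
  linarith

lemma mp_msg {n m : ℕ} (A : Fin m → Fin n → Bool) (x z : Fin n → ℝ) (i : Fin n) (j : Fin m)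
    (hj : j ∈ nhdX A i) :
    msgY A x z j i = x i + ∑ l ∈ (nhdY A j).erase i, (x l - z l) := by
  unfold msgY yvec
  rw [← Finset.add_sum_erase _ _ ((mp_mem A i j).mp hj), Finset.sum_sub_distrib]
  ring

lemma mp_odd {n m : ℕ} (A : Fin m → Fin n → Bool) (x : Fin n → ℝ) (t : ℕ) (i : Fin n) :
    xhat A x (2 * t + 1) i =
      sInf ((fun l => msgY A x (xhat A x (2 * t)) l i) '' (↑(nhdX A i) : Set (Fin m))) := by
  rw [xhat]; beta_reduce
  rw [if_neg]
  simp

lemma mp_even {n m : ℕ} (A : Fin m → Fin n → Bool) (x : Fin n → ℝ) (t : ℕ) (i : Fin n) :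
    xhat A x (2 * t + 2) i = max 0
      (sSup ((fun l => msgY A x (xhat A x (2 * t + 1)) l i) '' (↑(nhdX A i) : Set (Fin m)))) := by
  rw [xhat]; beta_reduce
  rw [if_pos]
  exact ⟨t + 1, by ring⟩

lemma mp_step {n m c : ℕ} (hc : 0 < c) (A : Fin m → Fin n → Bool) (x : Fin n → ℝ)
    (hX : ∀ i, (nhdX A i).card = c) (t : ℕ) (h : ∀ i, xhat A x (2 * t) i ≤ x i) (i : Fin n) :
    x i ≤ xhat A x (2 * t + 1) i := by
  rw [mp_odd]
  have hne : (nhdX A i).Nonempty := by rw [← Finset.card_pos, hX]; exact hc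
  apply le_csInf
  · exact (Finset.coe_nonempty.mpr hne).image _
  · rintro _ ⟨j, hj, rfl⟩
    simp only [mp_msg A x _ i j hj]
    have : 0 ≤ ∑ l ∈ (nhdY A j).erase i, (x l - xhat A x (2 * t) l) :=
      Finset.sum_nonneg fun l _ => sub_nonneg.mpr (h l)
    linarith

lemma mp_step2 {n m c : ℕ} (hc : 0 < c) (A : Fin m → Fin n → Bool) (x : Fin n → ℝ)
    (hx : ∀ i, 0 ≤ x i)
    (hX : ∀ i, (nhdX A i).card = c) (t : ℕ) (h : ∀ i, x i ≤ xhat A x (2 * t + 1) i) (i : Fin n) :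
    xhat A x (2 * t + 2) i ≤ x i := by
  rw [mp_even]
  have hne : (nhdX A i).Nonempty := by rw [← Finset.card_pos, hX]; exact hc
  apply max_le (hx i)
  apply csSup_le
  · exact (Finset.coe_nonempty.mpr hne).image _
  · rintro _ ⟨j, hj, rfl⟩
    simp only [mp_msg A x _ i j hj]
    have : ∑ l ∈ (nhdY A j).erase i, (x l - xhat A x (2 * t + 1) l) ≤ 0 :=
      Finset.sum_nonpos fun l _ => sub_nonpos.mpr (h l)
    linarith

lemma mp_lower {n m c : ℕ} (hc : 0 < c) (A : Fin m → Fin n → Bool) (x : Fin n → ℝ)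
    (hx : ∀ i, 0 ≤ x i) (hX : ∀ i, (nhdX A i).card = c) (t : ℕ) :
    ∀ i, xhat A x (2 * t) i ≤ x i := by
  induction t with
  | zero => intro i; simpa [xhat] using hx i
  | succ t ih => exact mp_step2 hc A x hx hX t (mp_step hc A x hX t ih)

/-- **Lemma (per-iteration error contraction).** With `X₊ = supp x⁽ᵏ⁾` and
`X₀ = X \ X₊`, for every `t ≥ 0`,
`Err_{X₊}^{2t+2} ≤ ((1-2ε)/(1+2ε))·Err_{X₊}^{2t} + (2d/(1+2ε))·Err_{X₀}^{2t}`. -/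
theorem error_contraction (n m c d k : ℕ)
    (hn : 0 < n) (hm : 0 < m) (hc : 0 < c) (hd : 0 < d) (hk : 0 < k)
    (A : Fin m → Fin n → Bool) (ε : ℝ) (hε : 0 < ε)
    (hreg : IsRegular A c d)
    (hexp : IsExpander A c (Nat.floor ((k : ℝ) / (2 * ε) + 1)) (1 / 2 + ε))
    (x xk : Fin n → ℝ) (hx : ∀ i, 0 ≤ x i) (hbest : BestKSparse k x xk) :
    ∀ t : ℕ,
      ∑ i ∈ Finset.univ.filter (fun i => xk i ≠ 0), (x i - xhat A x (2 * t + 2) i) ≤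
        (1 - 2 * ε) / (1 + 2 * ε) *
            ∑ i ∈ Finset.univ.filter (fun i => xk i ≠ 0), (x i - xhat A x (2 * t) i) +
          2 * (d : ℝ) / (1 + 2 * ε) *
            ∑ i ∈ Finset.univ \ Finset.univ.filter (fun i => xk i ≠ 0),
              (x i - xhat A x (2 * t) i) := by
  intro t
  have hX := hreg.1
  have hlow := mp_lower hc A x hx hX t
  have hup := mp_step hc A x hX t hlow
  have hlow2 := mp_step2 hc A x hx hX t hup
  refine mp_core hn hc hd A ε hε hreg hexp _ hbest.2.1 (fun i => x i - xhat A x (2 * t) i)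
    (fun i => xhat A x (2 * t + 1) i - x i) (fun i => x i - xhat A x (2 * t + 2) i)
    (fun i => sub_nonneg.mpr (hlow i)) (fun i => sub_nonneg.mpr (hup i))
    (fun i => sub_nonneg.mpr (hlow2 i)) ?_ ?_
  · intro i j hj
    have hle : xhat A x (2 * t + 1) i ≤ msgY A x (xhat A x (2 * t)) j i := by
      rw [mp_odd]
      exact csInf_le ((nhdX A i).finite_toSet.image _).bddBelow ⟨j, hj, rfl⟩
    rw [mp_msg A x _ i j hj] at hle
    rw [← Finset.add_sum_erase _ _ ((mp_mem A i j).mp hj)]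
    linarith
  · intro i j hj
    have hle : msgY A x (xhat A x (2 * t + 1)) j i ≤ xhat A x (2 * t + 2) i := by
      rw [mp_even]
      exact le_trans (le_csSup ((nhdX A i).finite_toSet.image _).bddAbove ⟨j, hj, rfl⟩)
        (le_max_right _ _)
    rw [mp_msg A x _ i j hj] at hle
    rw [← Finset.add_sum_erase _ _ ((mp_mem A i j).mp hj)]
    have hneg : ∑ l ∈ (nhdY A j).erase i, (x l - xhat A x (2 * t + 1) l) =
        - ∑ l ∈ (nhdY A j).erase i, (xhat A x (2 * t + 1) l - x l) := by
      rw [← Finset.sum_neg_distrib]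
      apply Finset.sum_congr rfl
      intro l _
      ring
    linarith
end
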